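/- arXiv:2212.07041 — 2 statements merged into one kernel-verified Lean document; each statement's English description precedes it below -/
import Mathlib

section
/- Let Z be a finite-dimensional real vector space and θ ∈ [0,1]. Then the interconnection structure D_c is a Dirac structure: D_c equals its orthogonal complement in (Z × Z × Z* × Z*) × (Z* × Z* × Z × Z) with respect to the symmetrized pairing ⟨⟨(F₁,E₁),(F₂,E₂)⟩⟩ := P_c(F₁,E₂) + P_c(F₂,E₁) associated with the power pairing P_c. -/
/-- The interconnection structure `D_c`: the set of tuples
`((w_L, w_R, w*_L, w*_R), (y*_L, y*_R, y_L, y_R))` satisfying the defining relations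
with parameter `θ`. -/
def interconnSet (θ : ℝ) {Z : Type*} [AddCommGroup Z] [Module ℝ Z] :
    Set ((Z × Z × Module.Dual ℝ Z × Module.Dual ℝ Z) ×
         (Module.Dual ℝ Z × Module.Dual ℝ Z × Z × Z)) :=
  {x | x.1.1 = (θ - 1 / 2) • x.2.2.2.1 - θ • x.2.2.2.2
    ∧ x.1.2.2.1 = (1 / 2 - θ) • x.2.1 + (θ - 1) • x.2.2.1
    ∧ x.1.2.1 = (1 - θ) • x.2.2.2.1 + (θ - 1 / 2) • x.2.2.2.2
    ∧ x.1.2.2.2 = θ • x.2.1 + (1 / 2 - θ) • x.2.2.1}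

/-!
`D_c` is the graph of a linear map from efforts to flows, and this map is skew for the power
pairing. Skewness turns orthogonality of `(f, e)` to the graph of `J` into
`P f e' = P (J e) e'` for all `e'`, which forces `f = J e` because the pairing separates flows.
-/

section DiracStructure

variable {R F E : Type*} [CommRing R] [AddCommGroup F] [Module R F] [AddCommGroup E] [Module R E]

/-- The symmetrized pairing `⟨⟨(f₁, e₁), (f₂, e₂)⟩⟩ = P f₁ e₂ + P f₂ e₁` on flow-effort pairs
associated with a power pairing `P` of flows with efforts. -/
def symmetrizedPairing (P : F →ₗ[R] E →ₗ[R] R) : LinearMap.BilinForm R (F × E) :=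
  let Q := P.compl₁₂ (LinearMap.fst R F E) (LinearMap.snd R F E)
  Q + Q.flip

lemma symmetrizedPairing_apply (P : F →ₗ[R] E →ₗ[R] R) (x y : F × E) :
    symmetrizedPairing P x y = P x.1 y.2 + P y.1 x.2 :=
  rfl

lemma mem_orthogonalBilin_symmetrizedPairing {P : F →ₗ[R] E →ₗ[R] R} {D : Submodule R (F × E)}
    {x : F × E} :
    x ∈ D.orthogonalBilin (symmetrizedPairing P) ↔ ∀ y ∈ D, P x.1 y.2 + P y.1 x.2 = 0 := by
  simp only [Submodule.mem_orthogonalBilin_iff, symmetrizedPairing_apply, add_comm]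

/-- A Dirac structure for the power pairing `P`: a submodule of the flow-effort pairs that equals
its orthogonal complement for the symmetrized pairing. -/
def IsDirac (P : F →ₗ[R] E →ₗ[R] R) (D : Submodule R (F × E)) : Prop :=
  D = D.orthogonalBilin (symmetrizedPairing P)

/-- The graph of a map `J` from efforts to flows, with the flow `J e` written before the effort `e`
as in a flow-effort pair (`LinearMap.graph` has the opposite order). -/
def swappedGraph (J : E →ₗ[R] F) : Submodule R (F × E) :=
  LinearMap.range (J.prod LinearMap.id)

lemma mem_swappedGraph {J : E →ₗ[R] F} {x : F × E} : x ∈ swappedGraph J ↔ x.1 = J x.2 := by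
  constructor
  · rintro ⟨e, rfl⟩
    rfl
  · intro hx
    exact ⟨x.2, Prod.ext hx.symm rfl⟩

theorem isDirac_swappedGraph_of_skew {P : F →ₗ[R] E →ₗ[R] R} (hP : P.SeparatingLeft)
    {J : E →ₗ[R] F} (hJ : ∀ e₁ e₂, P (J e₁) e₂ + P (J e₂) e₁ = 0) :
    IsDirac P (swappedGraph J) := by
  have hP_inj : Function.Injective P :=
    LinearMap.ker_eq_bot.mp (LinearMap.separatingLeft_iff_ker_eq_bot.mp hP)
  ext x
  calc x ∈ swappedGraph J
    _ ↔ x.1 = J x.2 := mem_swappedGraph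
    _ ↔ ∀ e, P x.1 e = P (J x.2) e := by rw [← hP_inj.eq_iff, LinearMap.ext_iff]
    _ ↔ ∀ e, P x.1 e + P (J e) x.2 = 0 := by
      refine forall_congr' fun e ↦ ?_
      rw [eq_neg_of_add_eq_zero_left (hJ x.2 e), eq_neg_iff_add_eq_zero]
    _ ↔ x ∈ (swappedGraph J).orthogonalBilin (symmetrizedPairing P) := by
      rw [mem_orthogonalBilin_symmetrizedPairing, swappedGraph]
      simp

end DiracStructure

section PowerPairing

variable (R Z : Type*) [CommRing R] [AddCommGroup Z] [Module R Z]

/-- The power pairing `P_c` of the flows `(w_L, w_R, w*_L, w*_R)` with the efforts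
`(y*_L, y*_R, y_L, y_R)`. -/
def powerPairing :
    (Z × Z × Module.Dual R Z × Module.Dual R Z) →ₗ[R]
      (Module.Dual R Z × Module.Dual R Z × Z × Z) →ₗ[R] R :=
  LinearMap.mk₂ R
    (fun w y ↦ y.1 w.1 + w.2.2.1 y.2.2.1 + y.2.1 w.2.1 + w.2.2.2 y.2.2.2)
    (fun _ _ _ ↦ by simp; ring) (fun _ _ _ ↦ by simp; ring)
    (fun _ _ _ ↦ by simp; ring) (fun _ _ _ ↦ by simp; ring)

variable {R Z}

lemma powerPairing_apply (w : Z × Z × Module.Dual R Z × Module.Dual R Z)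
    (y : Module.Dual R Z × Module.Dual R Z × Z × Z) :
    powerPairing R Z w y = y.1 w.1 + w.2.2.1 y.2.2.1 + y.2.1 w.2.1 + w.2.2.2 y.2.2.2 :=
  rfl

lemma powerPairing_separatingLeft [Module.Projective R Z] :
    (powerPairing R Z).SeparatingLeft := by
  rintro ⟨wL, wR, wL', wR'⟩ hw
  have hL : wL = 0 := (Module.forall_dual_apply_eq_zero_iff R wL).mp fun φ ↦ by
    simpa [powerPairing_apply] using hw (φ, 0, 0, 0)
  have hR : wR = 0 := (Module.forall_dual_apply_eq_zero_iff R wR).mp fun φ ↦ by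
    simpa [powerPairing_apply] using hw (0, φ, 0, 0)
  have hL' : wL' = 0 := LinearMap.ext fun z ↦ by
    simpa [powerPairing_apply] using hw (0, 0, z, 0)
  have hR' : wR' = 0 := LinearMap.ext fun z ↦ by
    simpa [powerPairing_apply] using hw (0, 0, 0, z)
  rw [hL, hR, hL', hR']
  rfl

end PowerPairing

section Interconnection

variable (θ : ℝ) (Z : Type*) [AddCommGroup Z] [Module ℝ Z]

/-- The linear map from efforts to flows whose swapped graph is the interconnection
structure `D_c`. -/
noncomputable def interconnMap :
    (Module.Dual ℝ Z × Module.Dual ℝ Z × Z × Z) →ₗ[ℝ]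
      (Z × Z × Module.Dual ℝ Z × Module.Dual ℝ Z) where
  toFun y :=
    ((θ - 1 / 2) • y.2.2.1 - θ • y.2.2.2,
      (1 - θ) • y.2.2.1 + (θ - 1 / 2) • y.2.2.2,
      (1 / 2 - θ) • y.1 + (θ - 1) • y.2.1,
      θ • y.1 + (1 / 2 - θ) • y.2.1)
  map_add' y y' := by ext <;> simp <;> module
  map_smul' c y := by
    simp only [Prod.smul_fst, Prod.smul_snd, Prod.smul_mk, smul_add, smul_sub, smul_comm c,
      RingHom.id_apply]

variable {Z}

lemma interconnMap_apply (y : Module.Dual ℝ Z × Module.Dual ℝ Z × Z × Z) :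
    interconnMap θ Z y =
      ((θ - 1 / 2) • y.2.2.1 - θ • y.2.2.2,
        (1 - θ) • y.2.2.1 + (θ - 1 / 2) • y.2.2.2,
        (1 / 2 - θ) • y.1 + (θ - 1) • y.2.1,
        θ • y.1 + (1 / 2 - θ) • y.2.1) :=
  rfl

lemma powerPairing_interconnMap_skew (y y' : Module.Dual ℝ Z × Module.Dual ℝ Z × Z × Z) :
    powerPairing ℝ Z (interconnMap θ Z y) y' + powerPairing ℝ Z (interconnMap θ Z y') y = 0 := by
  simp only [powerPairing_apply, interconnMap_apply, map_add, map_sub, map_smul,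
    LinearMap.add_apply, LinearMap.smul_apply, smul_eq_mul]
  ring

lemma interconnSet_eq_swappedGraph_interconnMap :
    interconnSet θ (Z := Z) = swappedGraph (interconnMap θ Z) := by
  ext x
  simp only [SetLike.mem_coe, mem_swappedGraph, interconnMap_apply, interconnSet,
    Set.mem_ofPred_eq, Prod.ext_iff]
  tauto

end Interconnection

theorem interconnection_is_dirac_general
    {Z : Type*} [AddCommGroup Z] [Module ℝ Z] (θ : ℝ) :
    interconnSet θ (Z := Z) =
      {x | ∀ y ∈ interconnSet θ (Z := Z),
        (y.2.1 x.1.1 + x.1.2.2.1 y.2.2.2.1 + y.2.2.1 x.1.2.1 + x.1.2.2.2 y.2.2.2.2)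
        + (x.2.1 y.1.1 + y.1.2.2.1 x.2.2.2.1 + x.2.2.1 y.1.2.1 + y.1.2.2.2 x.2.2.2.2)
          = 0} := by
  have hD : IsDirac (powerPairing ℝ Z) (swappedGraph (interconnMap θ Z)) :=
    isDirac_swappedGraph_of_skew powerPairing_separatingLeft (powerPairing_interconnMap_skew θ)
  rw [interconnSet_eq_swappedGraph_interconnMap]
  exact Set.ext fun x ↦ (SetLike.ext_iff.mp hD x).trans mem_orthogonalBilin_symmetrizedPairing

/-- The interconnection structure is a Dirac structure: it equals its orthogonal
complement with respect to the symmetrized pairing associated with the power pairing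
`P_c((w_L,w_R,w*_L,w*_R),(y*_L,y*_R,y_L,y_R)) = y*_L(w_L) + w*_L(y_L) + y*_R(w_R)
+ w*_R(y_R)`. -/
theorem interconnection_is_dirac
    {Z : Type*} [AddCommGroup Z] [Module ℝ Z] [FiniteDimensional ℝ Z]
    (θ : ℝ) (hθ : θ ∈ Set.Icc (0 : ℝ) 1) :
    interconnSet θ (Z := Z) =
      {x | ∀ y ∈ interconnSet θ (Z := Z),
        (y.2.1 x.1.1 + x.1.2.2.1 y.2.2.2.1 + y.2.2.1 x.1.2.1 + x.1.2.2.2 y.2.2.2.2)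
        + (x.2.1 y.1.1 + y.1.2.2.1 x.2.2.2.1 + x.2.2.1 y.1.2.1 + y.1.2.2.2 x.2.2.2.2)
          = 0} :=
  interconnection_is_dirac_general θ
end

section
/- Assume two copies (i = 1, 2) of the element setup, with boundary spaces B_p⁽¹⁾ = Z₁ × Z and B_p⁽²⁾ = Z₂ × Z sharing the common interface space Z, and let D_h⁽¹⁾, D_h⁽²⁾ denote the corresponding generalized Stokes–Dirac structures and D_c the interconnection structure on Z with parameter θ ∈ [0,1]. Suppose for i = 1, 2 the tuple (f_pⁱ, f_qⁱ, (y_i, y_Zⁱ), (y*_i, y_Z*ⁱ), e_pⁱ, e_qⁱ, (u*_i, u_Z*ⁱ), (u_i, u_Zⁱ)) belongs to D_h⁽ⁱ⁾, and suppose (u_Z¹, u_Z², u_Z*¹, u_Z*², y_Z*¹, y_Z*², y_Z¹, y_Z²) belongs to D_c. Then the total power balance holds: ⟨e_p¹|f_p¹⟩_p + ⟨e_q¹|f_q¹⟩_q + ⟨e_p²|f_p²⟩_p + ⟨e_q²|f_q²⟩_q + y*₁(u₁) + u*₁(y₁) + y*₂(u₂) + u*₂(y₂) = 0. -/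
/-!
On a single element, integration by parts cancels the two interior terms
`⟨e_p | d_pq e_q⟩` and `⟨e_q | d_qp e_p⟩` up to the boundary power `Q(tr_q e_q)(tr_p e_p)`, and the
two symmetric contributions with factor `1/2` cancel that. What remains is
`(-1)^p (u*(tr_p e_p) + Q(tr_q e_q)(u))`, which is minus the power `u*(y) + y*(u)` through the
boundary ports. The interconnection relation is skew for the interface pairing, so when the
balances of two elements are added the interface powers cancel and only the exterior ports remain.
-/

theorem neg_one_zpow_eq_of_even_sub {K : Type*} [DivisionRing K] {a b : ℤ} (h : Even (a - b)) :
    (-1 : K) ^ a = (-1 : K) ^ b := by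
  rw [← sub_add_cancel a b, zpow_add₀ (neg_ne_zero.mpr one_ne_zero), h.neg_one_zpow, one_mul]

/-- The pairing of the product spaces `V' × W'` and `V × W` that adds the pairings of the
components. It expresses the componentwise identification `(V × W)* = V* × W*`. -/
def prodPairing {K V' V W' W : Type*} [CommSemiring K]
    [AddCommMonoid V'] [Module K V'] [AddCommMonoid V] [Module K V]
    [AddCommMonoid W'] [Module K W'] [AddCommMonoid W] [Module K W]
    (φ : V' →ₗ[K] V →ₗ[K] K) (ψ : W' →ₗ[K] W →ₗ[K] K) : V' × W' →ₗ[K] V × W →ₗ[K] K :=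
  φ.compl₁₂ (.fst K V' W') (.fst K V W) + ψ.compl₁₂ (.snd K V' W') (.snd K V W)

/-- The element setup underlying a generalized Stokes–Dirac structure: efforts and flows of
degrees `p` and `q` with their pairings, exterior derivatives and traces related by integration by
parts. The boundary space `B` and its dual `B'` enter through a pairing `β`, so that the dual of a
product boundary may be taken componentwise. The maps `Tp` and `Tq` are the adjoints `tr_p*`
(up to sign) and `(Q tr_q)*`, given here by their defining identities. -/
structure StokesDiracElement {K B' B : Type*} [Field K]
    [AddCommGroup B'] [Module K B'] [AddCommGroup B] [Module K B] (β : B' →ₗ[K] B →ₗ[K] K)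
    (E_p F_p E_q F_q B_q : Type*)
    [AddCommGroup E_p] [Module K E_p] [AddCommGroup F_p] [Module K F_p]
    [AddCommGroup E_q] [Module K E_q] [AddCommGroup F_q] [Module K F_q]
    [AddCommGroup B_q] [Module K B_q] where
  (n p q : ℤ)
  degree_add : p + q = n + 1
  pairP : E_p →ₗ[K] F_p →ₗ[K] K
  pairQ : E_q →ₗ[K] F_q →ₗ[K] K
  dpq : E_q →ₗ[K] F_p
  dqp : E_p →ₗ[K] F_q
  trp : E_p →ₗ[K] B
  trq : E_q →ₗ[K] B_q
  Q : B_q →ₗ[K] B'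
  integration_by_parts (w : E_q) (v : E_p) :
    (-1 : K) ^ (p * (n - p)) * pairP v (dpq w) =
      (-1 : K) ^ p * pairQ w (dqp v) + β (Q (trq w)) (trp v)
  Tp : B' →ₗ[K] F_p
  pairP_Tp (v : E_p) (l : B') : pairP v (Tp l) = (-1 : K) ^ ((p - 1) * (q - 1)) * β l (trp v)
  Tq : B →ₗ[K] F_q
  pairQ_Tq (w : E_q) (u : B) : pairQ w (Tq u) = β (Q (trq w)) u

namespace StokesDiracElement

variable {K B' B E_p F_p E_q F_q B_q : Type*} [Field K]
  [AddCommGroup B'] [Module K B'] [AddCommGroup B] [Module K B] {β : B' →ₗ[K] B →ₗ[K] K}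
  [AddCommGroup E_p] [Module K E_p] [AddCommGroup F_p] [Module K F_p]
  [AddCommGroup E_q] [Module K E_q] [AddCommGroup F_q] [Module K F_q]
  [AddCommGroup B_q] [Module K B_q]
  (S : StokesDiracElement β E_p F_p E_q F_q B_q)

/-- The generalized Stokes–Dirac structure `D_h` of an element, as the set of its tuples
`((f_p, f_q, y_p, y*), (e_p, e_q, u*, u_p))`. -/
def stokesDirac : Set ((F_p × F_q × B × B') × (E_p × E_q × B' × B)) :=
  {((f_p, f_q, y, y'), (e_p, e_q, u', u)) |
    f_p = (-1 : K) ^ (S.p * S.q + 1) • S.dpq e_q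
        + ((-1 : K) ^ (S.p * S.q + 1 + S.q) * (1 / 2)) • S.Tp (S.Q (S.trq e_q))
        + (-1 : K) ^ (S.p * S.q + 1 + S.q) • S.Tp u' ∧
    f_q = S.dqp e_p + ((-1 : K) ^ S.p * (1 / 2)) • S.Tq (S.trp e_p)
        + (-1 : K) ^ S.p • S.Tq u ∧
    y' = -((-1 : K) ^ S.p • S.Q (S.trq e_q)) ∧
    y = -((-1 : K) ^ S.p • S.trp e_p)}

theorem signed_pairP_dpq (w : E_q) (v : E_p) :
    (-1 : K) ^ (S.p * S.q + 1) * S.pairP v (S.dpq w) =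
      -S.pairQ w (S.dqp v) - (-1 : K) ^ S.p * β (S.Q (S.trq w)) (S.trp v) := by
  have sign : (-1 : K) ^ (S.p * S.q + 1) = -((-1) ^ S.p * (-1) ^ (S.p * (S.n - S.p))) := by
    have hn : S.n - S.p = S.q - 1 := by linarith [S.degree_add]
    rw [zpow_add_one₀ (neg_ne_zero.mpr one_ne_zero), mul_neg_one,
      ← zpow_add₀ (neg_ne_zero.mpr one_ne_zero), hn]
    congr 2
    ring
  have sign_sq : (-1 : K) ^ S.p * (-1) ^ S.p = 1 := by
    rw [← mul_zpow, neg_one_mul, neg_neg, one_zpow]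
  rw [sign, neg_mul, mul_assoc, S.integration_by_parts]
  linear_combination -(S.pairQ w (S.dqp v)) * sign_sq

theorem signed_pairP_Tp (v : E_p) (l : B') :
    (-1 : K) ^ (S.p * S.q + 1 + S.q) * S.pairP v (S.Tp l) = (-1 : K) ^ S.p * β l (S.trp v) := by
  rw [S.pairP_Tp, ← mul_assoc, ← zpow_add₀ (neg_ne_zero.mpr one_ne_zero)]
  congr 1
  exact neg_one_zpow_eq_of_even_sub ⟨S.p * S.q + 1 - S.p, by ring⟩

variable {S} {f_p : F_p} {f_q : F_q} {y : B} {y' : B'} {e_p : E_p} {e_q : E_q} {u' : B'} {u : B}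

theorem pairP_add_pairQ_of_mem_stokesDirac [NeZero (2 : K)]
    (h : ((f_p, f_q, y, y'), (e_p, e_q, u', u)) ∈ S.stokesDirac) :
    S.pairP e_p f_p + S.pairQ e_q f_q =
      (-1 : K) ^ S.p * (β u' (S.trp e_p) + β (S.Q (S.trq e_q)) u) := by
  obtain ⟨rfl, rfl, -, -⟩ := h
  simp only [map_add, map_smul, smul_eq_mul, S.pairQ_Tq, mul_right_comm _ (1 / 2 : K),
    S.signed_pairP_dpq, S.signed_pairP_Tp]
  linear_combination (-1 : K) ^ S.p * β (S.Q (S.trq e_q)) (S.trp e_p) * add_halves (1 : K)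

theorem power_balance [NeZero (2 : K)]
    (h : ((f_p, f_q, y, y'), (e_p, e_q, u', u)) ∈ S.stokesDirac) :
    S.pairP e_p f_p + S.pairQ e_q f_q + β y' u + β u' y = 0 := by
  rw [pairP_add_pairQ_of_mem_stokesDirac h]
  obtain ⟨-, -, rfl, rfl⟩ := h
  simp only [map_neg, map_smul, LinearMap.neg_apply, LinearMap.smul_apply, smul_eq_mul]
  ring

end StokesDiracElement

/-- The interconnection structure `D_c` on an interface space `Z` with dual `Z'` and parameter `θ`,
as the set of its tuples `((w_L, w_R, w*_L, w*_R), (y*_L, y*_R, y_L, y_R))`. -/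
def interconnection {K : Type*} (Z' Z : Type*) [Field K] [AddCommGroup Z'] [Module K Z']
    [AddCommGroup Z] [Module K Z] (θ : K) : Set ((Z × Z × Z' × Z') × (Z' × Z' × Z × Z)) :=
  {((wL, wR, wL', wR'), (yL', yR', yL, yR)) |
    wL = (θ - 1 / 2) • yL - θ • yR ∧
    wL' = (1 / 2 - θ) • yL' + (θ - 1) • yR' ∧
    wR = (1 - θ) • yL + (θ - 1 / 2) • yR ∧
    wR' = θ • yL' + (1 / 2 - θ) • yR'}

theorem interconnection_power_balance {K Z' Z : Type*} [Field K]
    [AddCommGroup Z'] [Module K Z'] [AddCommGroup Z] [Module K Z] (ζ : Z' →ₗ[K] Z →ₗ[K] K)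
    {θ : K} {wL wR yL yR : Z} {wL' wR' yL' yR' : Z'}
    (h : ((wL, wR, wL', wR'), (yL', yR', yL, yR)) ∈ interconnection Z' Z θ) :
    ζ yL' wL + ζ wL' yL + ζ yR' wR + ζ wR' yR = 0 := by
  obtain ⟨rfl, rfl, rfl, rfl⟩ := h
  simp only [map_add, map_sub, map_smul, smul_eq_mul, LinearMap.add_apply, LinearMap.smul_apply]
  ring

theorem coupled_elements_total_power_balance_general
    {K E_p₁ F_p₁ E_q₁ F_q₁ B_q₁ E_p₂ F_p₂ E_q₂ F_q₂ B_q₂ Z₁' Z₁ Z₂' Z₂ Z' Z : Type*}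
    [Field K] [NeZero (2 : K)]
    [AddCommGroup E_p₁] [Module K E_p₁] [AddCommGroup F_p₁] [Module K F_p₁]
    [AddCommGroup E_q₁] [Module K E_q₁] [AddCommGroup F_q₁] [Module K F_q₁]
    [AddCommGroup B_q₁] [Module K B_q₁]
    [AddCommGroup E_p₂] [Module K E_p₂] [AddCommGroup F_p₂] [Module K F_p₂]
    [AddCommGroup E_q₂] [Module K E_q₂] [AddCommGroup F_q₂] [Module K F_q₂]
    [AddCommGroup B_q₂] [Module K B_q₂]
    [AddCommGroup Z₁'] [Module K Z₁'] [AddCommGroup Z₁] [Module K Z₁]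
    [AddCommGroup Z₂'] [Module K Z₂'] [AddCommGroup Z₂] [Module K Z₂]
    [AddCommGroup Z'] [Module K Z'] [AddCommGroup Z] [Module K Z]
    {ζ₁ : Z₁' →ₗ[K] Z₁ →ₗ[K] K} {ζ₂ : Z₂' →ₗ[K] Z₂ →ₗ[K] K} {ζ : Z' →ₗ[K] Z →ₗ[K] K}
    (S₁ : StokesDiracElement (prodPairing ζ₁ ζ) E_p₁ F_p₁ E_q₁ F_q₁ B_q₁)
    (S₂ : StokesDiracElement (prodPairing ζ₂ ζ) E_p₂ F_p₂ E_q₂ F_q₂ B_q₂) {θ : K}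
    {f_p₁ : F_p₁} {f_q₁ : F_q₁} {e_p₁ : E_p₁} {e_q₁ : E_q₁}
    {y₁ u₁ : Z₁} {y₁' u₁' : Z₁'} {yZ₁ uZ₁ : Z} {yZ₁' uZ₁' : Z'}
    {f_p₂ : F_p₂} {f_q₂ : F_q₂} {e_p₂ : E_p₂} {e_q₂ : E_q₂}
    {y₂ u₂ : Z₂} {y₂' u₂' : Z₂'} {yZ₂ uZ₂ : Z} {yZ₂' uZ₂' : Z'}
    (h₁ : ((f_p₁, f_q₁, (y₁, yZ₁), (y₁', yZ₁')), (e_p₁, e_q₁, (u₁', uZ₁'), (u₁, uZ₁))) ∈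
      S₁.stokesDirac)
    (h₂ : ((f_p₂, f_q₂, (y₂, yZ₂), (y₂', yZ₂')), (e_p₂, e_q₂, (u₂', uZ₂'), (u₂, uZ₂))) ∈
      S₂.stokesDirac)
    (hc : ((uZ₁, uZ₂, uZ₁', uZ₂'), (yZ₁', yZ₂', yZ₁, yZ₂)) ∈ interconnection Z' Z θ) :
    S₁.pairP e_p₁ f_p₁ + S₁.pairQ e_q₁ f_q₁ + S₂.pairP e_p₂ f_p₂ + S₂.pairQ e_q₂ f_q₂
      + ζ₁ y₁' u₁ + ζ₁ u₁' y₁ + ζ₂ y₂' u₂ + ζ₂ u₂' y₂ = 0 := by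
  have element₁ : S₁.pairP e_p₁ f_p₁ + S₁.pairQ e_q₁ f_q₁
      + (ζ₁ y₁' u₁ + ζ yZ₁' uZ₁) + (ζ₁ u₁' y₁ + ζ uZ₁' yZ₁) = 0 :=
    StokesDiracElement.power_balance h₁
  have element₂ : S₂.pairP e_p₂ f_p₂ + S₂.pairQ e_q₂ f_q₂
      + (ζ₂ y₂' u₂ + ζ yZ₂' uZ₂) + (ζ₂ u₂' y₂ + ζ uZ₂' yZ₂) = 0 :=
    StokesDiracElement.power_balance h₂
  linear_combination element₁ + element₂ - interconnection_power_balance ζ hc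

/-- Total power balance of two elements coupled through the interconnection structure:
for two copies of the element setup with boundary spaces `B_p⁽¹⁾ = Z₁ × Z` and
`B_p⁽²⁾ = Z₂ × Z` sharing the interface space `Z`, if each tuple belongs to the
corresponding generalized Stokes-Dirac structure and the interface ports are coupled
through the interconnection structure `D_c` on `Z`, then
`⟨e_p¹|f_p¹⟩ + ⟨e_q¹|f_q¹⟩ + ⟨e_p²|f_p²⟩ + ⟨e_q²|f_q²⟩ + y*₁(u₁) + u*₁(y₁)
+ y*₂(u₂) + u*₂(y₂) = 0`. -/
theorem coupled_elements_total_power_balance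
    (n p q : ℤ) (hpq : p + q = n + 1)
    {E_p₁ F_p₁ E_q₁ F_q₁ B_q₁ E_p₂ F_p₂ E_q₂ F_q₂ B_q₂ Z₁ Z₂ Z : Type*}
    [AddCommGroup E_p₁] [Module ℝ E_p₁] [FiniteDimensional ℝ E_p₁]
    [AddCommGroup F_p₁] [Module ℝ F_p₁] [FiniteDimensional ℝ F_p₁]
    [AddCommGroup E_q₁] [Module ℝ E_q₁] [FiniteDimensional ℝ E_q₁]
    [AddCommGroup F_q₁] [Module ℝ F_q₁] [FiniteDimensional ℝ F_q₁]
    [AddCommGroup B_q₁] [Module ℝ B_q₁] [FiniteDimensional ℝ B_q₁]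
    [AddCommGroup E_p₂] [Module ℝ E_p₂] [FiniteDimensional ℝ E_p₂]
    [AddCommGroup F_p₂] [Module ℝ F_p₂] [FiniteDimensional ℝ F_p₂]
    [AddCommGroup E_q₂] [Module ℝ E_q₂] [FiniteDimensional ℝ E_q₂]
    [AddCommGroup F_q₂] [Module ℝ F_q₂] [FiniteDimensional ℝ F_q₂]
    [AddCommGroup B_q₂] [Module ℝ B_q₂] [FiniteDimensional ℝ B_q₂]
    [AddCommGroup Z₁] [Module ℝ Z₁] [FiniteDimensional ℝ Z₁]
    [AddCommGroup Z₂] [Module ℝ Z₂] [FiniteDimensional ℝ Z₂]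
    [AddCommGroup Z] [Module ℝ Z] [FiniteDimensional ℝ Z]
    -- element setup for element 1:
    (pairP₁ : E_p₁ →ₗ[ℝ] F_p₁ →ₗ[ℝ] ℝ)
    (hP₁₁ : ∀ e : E_p₁, (∀ f : F_p₁, pairP₁ e f = 0) → e = 0)
    (hP₁₂ : ∀ f : F_p₁, (∀ e : E_p₁, pairP₁ e f = 0) → f = 0)
    (pairQ₁ : E_q₁ →ₗ[ℝ] F_q₁ →ₗ[ℝ] ℝ)
    (hQ₁₁ : ∀ e : E_q₁, (∀ f : F_q₁, pairQ₁ e f = 0) → e = 0)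
    (hQ₁₂ : ∀ f : F_q₁, (∀ e : E_q₁, pairQ₁ e f = 0) → f = 0)
    (dpq₁ : E_q₁ →ₗ[ℝ] F_p₁) (dqp₁ : E_p₁ →ₗ[ℝ] F_q₁)
    (trp₁ : E_p₁ →ₗ[ℝ] Z₁ × Z) (trq₁ : E_q₁ →ₗ[ℝ] B_q₁)
    (Q₁ : B_q₁ →ₗ[ℝ] Module.Dual ℝ Z₁ × Module.Dual ℝ Z)
    (hibp₁ : ∀ (w : E_q₁) (v : E_p₁),
      (-1 : ℝ) ^ (p * (n - p)) * pairP₁ v (dpq₁ w)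
        = (-1 : ℝ) ^ p * pairQ₁ w (dqp₁ v)
          + ((Q₁ (trq₁ w)).1 (trp₁ v).1 + (Q₁ (trq₁ w)).2 (trp₁ v).2))
    (T_p₁ : Module.Dual ℝ Z₁ × Module.Dual ℝ Z →ₗ[ℝ] F_p₁)
    (hTp₁ : ∀ (v : E_p₁) (l : Module.Dual ℝ Z₁ × Module.Dual ℝ Z),
      pairP₁ v (T_p₁ l)
        = (-1 : ℝ) ^ ((p - 1) * (q - 1)) * (l.1 (trp₁ v).1 + l.2 (trp₁ v).2))
    (T_q₁ : Z₁ × Z →ₗ[ℝ] F_q₁)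
    (hTq₁ : ∀ (w : E_q₁) (u : Z₁ × Z),
      pairQ₁ w (T_q₁ u) = (Q₁ (trq₁ w)).1 u.1 + (Q₁ (trq₁ w)).2 u.2)
    -- element setup for element 2:
    (pairP₂ : E_p₂ →ₗ[ℝ] F_p₂ →ₗ[ℝ] ℝ)
    (hP₂₁ : ∀ e : E_p₂, (∀ f : F_p₂, pairP₂ e f = 0) → e = 0)
    (hP₂₂ : ∀ f : F_p₂, (∀ e : E_p₂, pairP₂ e f = 0) → f = 0)
    (pairQ₂ : E_q₂ →ₗ[ℝ] F_q₂ →ₗ[ℝ] ℝ)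
    (hQ₂₁ : ∀ e : E_q₂, (∀ f : F_q₂, pairQ₂ e f = 0) → e = 0)
    (hQ₂₂ : ∀ f : F_q₂, (∀ e : E_q₂, pairQ₂ e f = 0) → f = 0)
    (dpq₂ : E_q₂ →ₗ[ℝ] F_p₂) (dqp₂ : E_p₂ →ₗ[ℝ] F_q₂)
    (trp₂ : E_p₂ →ₗ[ℝ] Z₂ × Z) (trq₂ : E_q₂ →ₗ[ℝ] B_q₂)
    (Q₂ : B_q₂ →ₗ[ℝ] Module.Dual ℝ Z₂ × Module.Dual ℝ Z)
    (hibp₂ : ∀ (w : E_q₂) (v : E_p₂),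
      (-1 : ℝ) ^ (p * (n - p)) * pairP₂ v (dpq₂ w)
        = (-1 : ℝ) ^ p * pairQ₂ w (dqp₂ v)
          + ((Q₂ (trq₂ w)).1 (trp₂ v).1 + (Q₂ (trq₂ w)).2 (trp₂ v).2))
    (T_p₂ : Module.Dual ℝ Z₂ × Module.Dual ℝ Z →ₗ[ℝ] F_p₂)
    (hTp₂ : ∀ (v : E_p₂) (l : Module.Dual ℝ Z₂ × Module.Dual ℝ Z),
      pairP₂ v (T_p₂ l)
        = (-1 : ℝ) ^ ((p - 1) * (q - 1)) * (l.1 (trp₂ v).1 + l.2 (trp₂ v).2))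
    (T_q₂ : Z₂ × Z →ₗ[ℝ] F_q₂)
    (hTq₂ : ∀ (w : E_q₂) (u : Z₂ × Z),
      pairQ₂ w (T_q₂ u) = (Q₂ (trq₂ w)).1 u.1 + (Q₂ (trq₂ w)).2 u.2)
    (θ : ℝ) (hθ : θ ∈ Set.Icc (0 : ℝ) 1)
    -- port variables of element 1:
    (f_p₁ : F_p₁) (f_q₁ : F_q₁) (e_p₁ : E_p₁) (e_q₁ : E_q₁)
    (y₁ : Z₁) (yZ₁ : Z) (ystar₁ : Module.Dual ℝ Z₁) (ystarZ₁ : Module.Dual ℝ Z)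
    (u₁ : Z₁) (uZ₁ : Z) (ustar₁ : Module.Dual ℝ Z₁) (ustarZ₁ : Module.Dual ℝ Z)
    -- port variables of element 2:
    (f_p₂ : F_p₂) (f_q₂ : F_q₂) (e_p₂ : E_p₂) (e_q₂ : E_q₂)
    (y₂ : Z₂) (yZ₂ : Z) (ystar₂ : Module.Dual ℝ Z₂) (ystarZ₂ : Module.Dual ℝ Z)
    (u₂ : Z₂) (uZ₂ : Z) (ustar₂ : Module.Dual ℝ Z₂) (ustarZ₂ : Module.Dual ℝ Z)
    -- the tuple of element 1 belongs to `D_h⁽¹⁾`: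
    (hfp₁ : f_p₁ = ((-1 : ℝ) ^ (p * q + 1)) • dpq₁ e_q₁
        + (((-1 : ℝ) ^ (p * q + 1 + q)) * (1 / 2)) • T_p₁ (Q₁ (trq₁ e_q₁))
        + ((-1 : ℝ) ^ (p * q + 1 + q)) • T_p₁ (ustar₁, ustarZ₁))
    (hfq₁ : f_q₁ = dqp₁ e_p₁ + (((-1 : ℝ) ^ p) * (1 / 2)) • T_q₁ (trp₁ e_p₁)
        + ((-1 : ℝ) ^ p) • T_q₁ (u₁, uZ₁))
    (hystar₁ : (ystar₁, ystarZ₁) = -(((-1 : ℝ) ^ p) • Q₁ (trq₁ e_q₁)))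
    (hy₁ : (y₁, yZ₁) = -(((-1 : ℝ) ^ p) • trp₁ e_p₁))
    -- the tuple of element 2 belongs to `D_h⁽²⁾`:
    (hfp₂ : f_p₂ = ((-1 : ℝ) ^ (p * q + 1)) • dpq₂ e_q₂
        + (((-1 : ℝ) ^ (p * q + 1 + q)) * (1 / 2)) • T_p₂ (Q₂ (trq₂ e_q₂))
        + ((-1 : ℝ) ^ (p * q + 1 + q)) • T_p₂ (ustar₂, ustarZ₂))
    (hfq₂ : f_q₂ = dqp₂ e_p₂ + (((-1 : ℝ) ^ p) * (1 / 2)) • T_q₂ (trp₂ e_p₂)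
        + ((-1 : ℝ) ^ p) • T_q₂ (u₂, uZ₂))
    (hystar₂ : (ystar₂, ystarZ₂) = -(((-1 : ℝ) ^ p) • Q₂ (trq₂ e_q₂)))
    (hy₂ : (y₂, yZ₂) = -(((-1 : ℝ) ^ p) • trp₂ e_p₂))
    -- the interface ports belong to the interconnection structure `D_c` on `Z`:
    (hc₁ : uZ₁ = (θ - 1 / 2) • yZ₁ - θ • yZ₂)
    (hc₂ : ustarZ₁ = (1 / 2 - θ) • ystarZ₁ + (θ - 1) • ystarZ₂)
    (hc₃ : uZ₂ = (1 - θ) • yZ₁ + (θ - 1 / 2) • yZ₂)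
    (hc₄ : ustarZ₂ = θ • ystarZ₁ + (1 / 2 - θ) • ystarZ₂) :
    pairP₁ e_p₁ f_p₁ + pairQ₁ e_q₁ f_q₁ + pairP₂ e_p₂ f_p₂ + pairQ₂ e_q₂ f_q₂
      + ystar₁ u₁ + ustar₁ y₁ + ystar₂ u₂ + ustar₂ y₂ = 0 := by
  exact coupled_elements_total_power_balance_general
    (ζ₁ := .id (M := Module.Dual ℝ Z₁)) (ζ₂ := .id (M := Module.Dual ℝ Z₂))
    (ζ := .id (M := Module.Dual ℝ Z))
    ⟨n, p, q, hpq, pairP₁, pairQ₁, dpq₁, dqp₁, trp₁, trq₁, Q₁, hibp₁, T_p₁, hTp₁, T_q₁, hTq₁⟩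
    ⟨n, p, q, hpq, pairP₂, pairQ₂, dpq₂, dqp₂, trp₂, trq₂, Q₂, hibp₂, T_p₂, hTp₂, T_q₂, hTq₂⟩
    ⟨hfp₁, hfq₁, hystar₁, hy₁⟩ ⟨hfp₂, hfq₂, hystar₂, hy₂⟩ ⟨hc₁, hc₂, hc₃, hc₄⟩
end
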